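/- Let $\Gamma$ be a (finite, simple, connected) distance-regular graph of diameter $D \ge 2$, and let $\Delta$ be an induced subgraph of $\Gamma$ on at least two vertices which is regular (as a graph) and such that any two vertices of $\Delta$ have distance at most two in $\Gamma$. For a nonzero real number $q$, let $\mathbb{D}_q$ be the $q$-distance matrix of $\Gamma$, that is, the real symmetric matrix indexed by the vertices of $\Gamma$ with entries $(\mathbb{D}_q)_{xy} = \sum_{j=0}^{d(x,y)-1} q^{-j}$ for $x \ne y$ and $(\mathbb{D}_q)_{xx} = 0$, where $d$ is the graph distance of $\Gamma$. If, for some real number $q < 0$, the matrix $\mathbb{D}_q$ has exactly one positive eigenvalue (counted with multiplicity), then the second largest eigenvalue $\lambda_2$ (counted with multiplicity) of the adjacency matrix of $\Delta$ satisfies $\lambda_2 \le -q - 1$. -/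

import Mathlib

/-- A finite graph `G` is distance-regular: it is connected, and for all `h, i, j` between `0` and
the diameter there is a constant `p = p^h_{ij}` such that any two vertices `x, y` at distance `h`
have exactly `p` vertices `z` with `d(x,z) = i` and `d(y,z) = j`. -/
structure IsDistanceRegular {V : Type*} [Fintype V] (G : SimpleGraph V) : Prop where
  connected : G.Connected
  inter : ∀ h i j : ℕ, h ≤ G.diam → i ≤ G.diam → j ≤ G.diam →
    ∃ p : ℕ, ∀ x y : V, G.dist x y = h →
      (Finset.univ.filter fun z : V => G.dist x z = i ∧ G.dist y z = j).card = p

/-- The `q`-distance matrix of `G`, with `(x,y)` entry `∑_{j=0}^{d(x,y)-1} q^{-j}`; the sum is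
empty on the diagonal. -/
noncomputable def qDistMatrix {V : Type*} (G : SimpleGraph V) (q : ℝ) : Matrix V V ℝ :=
  Matrix.of fun x y => ∑ j ∈ Finset.range (G.dist x y), q⁻¹ ^ j

theorem qDistMatrix_isHermitian {V : Type*} (G : SimpleGraph V) (q : ℝ) :
    (qDistMatrix G q).IsHermitian := by
  ext x y
  simp [qDistMatrix, SimpleGraph.dist_comm]

theorem adjMatrix_isHermitian {V : Type*} (G : SimpleGraph V) [DecidableRel G.Adj] :
    (G.adjMatrix ℝ).IsHermitian := by
  ext x y
  simp [SimpleGraph.adjMatrix_apply, SimpleGraph.adj_comm]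

/-- A real symmetric matrix has exactly one positive eigenvalue, counted with multiplicity. -/
def HasExactlyOnePosEigenvalue {n : Type*} [Fintype n] [DecidableEq n] {A : Matrix n n ℝ}
    (hA : A.IsHermitian) : Prop :=
  (Finset.univ.filter fun i : n => 0 < hA.eigenvalues i).card = 1

/-- The second largest eigenvalue, counted with multiplicity, of a real symmetric matrix of order
at least two (`eigenvalues₀` lists the eigenvalues with multiplicity in nonincreasing order,
starting from index `0`). -/
noncomputable def secondLargestEigenvalue {n : Type*} [Fintype n] [DecidableEq n]
    {A : Matrix n n ℝ} (hA : A.IsHermitian) (hn : 2 ≤ Fintype.card n) : ℝ :=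
  hA.eigenvalues₀ ⟨1, hn⟩

/-!
By interlacing, the principal submatrix of `𝔻_q` on `S` has second largest eigenvalue at most `0`.
Since all distances in `S` are at most two, the adjacency matrix of the induced subgraph is
`-q 𝔻_q + (q + 1) J + (-q - 1) I` there, with `J` the all-ones matrix. If `q ≤ -1`, then
`(q + 1) J` is negative semidefinite, and the bound `-q - 1` follows from the Courant–Fischer
description of the second largest eigenvalue. If `S` is not a clique, then `q ≤ -1` holds, because
for `-1 < q < 0` the submatrix of `𝔻_q` on a geodesic of length two has two positive eigenvalues.
If `S` is a clique, then `λ₂ = -1`.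
-/

section DotProduct

open Matrix

variable {R m n : Type*} [Fintype m] [Fintype n]

theorem dotProduct_mulVec_comm_of_isSymm [CommSemiring R] {A : Matrix n n R} (hA : A.IsSymm)
    (x y : n → R) : x ⬝ᵥ A *ᵥ y = y ⬝ᵥ A *ᵥ x := by
  rw [dotProduct_mulVec, ← mulVec_transpose, hA.eq, dotProduct_comm]

theorem dotProduct_vecMulVec_one_mulVec [CommSemiring R] (y : n → R) :
    y ⬝ᵥ vecMulVec 1 1 *ᵥ y = (y ⬝ᵥ 1) ^ 2 := by
  rw [vecMulVec_mulVec, op_smul_eq_smul, dotProduct_smul, dotProduct_comm 1, smul_eq_mul, pow_two]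

theorem extend_zero_dotProduct [NonUnitalNonAssocSemiring R] {f : m → n} (hf : f.Injective)
    (y : m → R) (u : n → R) : Function.extend f y 0 ⬝ᵥ u = y ⬝ᵥ u ∘ f := by
  refine (Fintype.sum_of_injective f hf _ _ (fun v hv => ?_) fun i => ?_).symm
  · rw [Function.extend_apply' _ _ _ hv, Pi.zero_apply, zero_mul]
  · rw [hf.extend_apply, Function.comp_apply]

theorem extend_zero_dotProduct_self [NonUnitalNonAssocSemiring R] {f : m → n} (hf : f.Injective)
    (y : m → R) :
    Function.extend f y 0 ⬝ᵥ Function.extend f y 0 = y ⬝ᵥ y := by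
  rw [extend_zero_dotProduct hf, Function.extend_comp hf]

theorem extend_zero_dotProduct_mulVec [NonUnitalCommSemiring R] {f : m → n} (hf : f.Injective)
    (A : Matrix n n R) (y : m → R) :
    Function.extend f y 0 ⬝ᵥ A *ᵥ Function.extend f y 0 = y ⬝ᵥ A.submatrix f f *ᵥ y := by
  rw [extend_zero_dotProduct hf]
  congr 1
  ext i
  rw [Function.comp_apply, mulVec, dotProduct_comm, extend_zero_dotProduct hf, dotProduct_comm]
  rfl

theorem dotProduct_mulVec_nonpos_of_conjugate [CommRing R] [LinearOrder R] [IsStrictOrderedRing R]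
    {A : Matrix n n R} (hA : A.IsSymm) {u x y : n → R}
    (hu : ∀ z, z ⬝ᵥ u = 0 → z ⬝ᵥ A *ᵥ z ≤ 0) (hx : 0 < x ⬝ᵥ A *ᵥ x)
    (hxy : x ⬝ᵥ A *ᵥ y = 0) : y ⬝ᵥ A *ᵥ y ≤ 0 := by
  have hxu : x ⬝ᵥ u ≠ 0 := fun h0 => (hu x h0).not_gt hx
  have hyx : y ⬝ᵥ A *ᵥ x = 0 := by rw [dotProduct_mulVec_comm_of_isSymm hA, hxy]
  have horth : ((y ⬝ᵥ u) • x - (x ⬝ᵥ u) • y) ⬝ᵥ u = 0 := by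
    simp only [sub_dotProduct, smul_dotProduct, smul_eq_mul]
    ring
  have hle : (y ⬝ᵥ u) ^ 2 * (x ⬝ᵥ A *ᵥ x) + (x ⬝ᵥ u) ^ 2 * (y ⬝ᵥ A *ᵥ y) ≤ 0 := by
    have h := hu _ horth
    simp only [mulVec_sub, mulVec_smul, sub_dotProduct, dotProduct_sub, smul_dotProduct,
      dotProduct_smul, smul_eq_mul, hxy, hyx] at h
    linarith
  have hprod : (x ⬝ᵥ u) ^ 2 * (y ⬝ᵥ A *ᵥ y) ≤ 0 := by
    linarith [mul_nonneg (sq_nonneg (y ⬝ᵥ u)) hx.le]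
  exact nonpos_of_mul_nonpos_right hprod (sq_pos_of_ne_zero hxu)

end DotProduct

section SecondLargestEigenvalue

open Matrix

variable {m n : Type*} [Fintype m] [Fintype n] {A : Matrix n n ℝ}

theorem orthonormalBasis_dotProduct_eq_ite [DecidableEq m]
    (b : OrthonormalBasis m ℝ (EuclideanSpace ℝ n)) (i j : m) :
    (b i).ofLp ⬝ᵥ (b j).ofLp = if i = j then 1 else 0 := by
  have h := orthonormal_iff_ite.mp b.orthonormal i j
  rwa [EuclideanSpace.inner_eq_star_dotProduct, star_trivial, dotProduct_comm] at h

theorem dotProduct_eq_sum_orthonormalBasis (b : OrthonormalBasis m ℝ (EuclideanSpace ℝ n))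
    (x y : n → ℝ) : x ⬝ᵥ y = ∑ i, (b i).ofLp ⬝ᵥ x * (b i).ofLp ⬝ᵥ y := by
  have h := b.sum_inner_mul_inner (WithLp.toLp 2 x) (WithLp.toLp 2 y)
  simp only [EuclideanSpace.inner_eq_star_dotProduct, star_trivial] at h
  rw [dotProduct_comm, ← h]
  exact Finset.sum_congr rfl fun i _ => by rw [dotProduct_comm y]

theorem dotProduct_mulVec_eq_sum_eigenvalues [DecidableEq n] (hA : A.IsHermitian) (y : n → ℝ) :
    y ⬝ᵥ A *ᵥ y = ∑ i, hA.eigenvalues i * ((hA.eigenvectorBasis i).ofLp ⬝ᵥ y) ^ 2 := by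
  rw [dotProduct_eq_sum_orthonormalBasis hA.eigenvectorBasis]
  refine Finset.sum_congr rfl fun i _ => ?_
  rw [dotProduct_mulVec_comm_of_isSymm (isHermitian_iff_isSymm.mp hA),
    hA.mulVec_eigenvectorBasis, dotProduct_smul, dotProduct_comm y, smul_eq_mul]
  ring

variable [DecidableEq m] [DecidableEq n]

theorem exists_eigenvalues_eq_secondLargestEigenvalue (hA : A.IsHermitian)
    (hn : 2 ≤ Fintype.card n) :
    ∃ i j, i ≠ j ∧ hA.eigenvalues j = secondLargestEigenvalue hA hn ∧
      secondLargestEigenvalue hA hn ≤ hA.eigenvalues i ∧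
      ∀ k, k ≠ i → hA.eigenvalues k ≤ secondLargestEigenvalue hA hn := by
  set E : Fin (Fintype.card n) ≃ n := Fintype.equivOfCardEq (Fintype.card_fin _)
  have hE (k) : hA.eigenvalues (E k) = hA.eigenvalues₀ k :=
    congrArg hA.eigenvalues₀ (E.symm_apply_apply k)
  refine ⟨E ⟨0, by omega⟩, E ⟨1, hn⟩, E.injective.ne (by simp), hE _, ?_, fun k hk => ?_⟩
  · rw [hE]
    exact hA.eigenvalues₀_antitone (Nat.zero_le 1)
  · obtain ⟨⟨k, hkn⟩, rfl⟩ := E.surjective k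
    have hk0 : k ≠ 0 := by rintro rfl; exact hk rfl
    rw [hE]
    exact hA.eigenvalues₀_antitone (Fin.mk_le_mk.mpr (Nat.one_le_iff_ne_zero.mpr hk0))

theorem secondLargestEigenvalue_le_of_hyperplane (hA : A.IsHermitian) (hn : 2 ≤ Fintype.card n)
    {μ : ℝ} {u : n → ℝ} (hu : ∀ y, y ⬝ᵥ u = 0 → y ⬝ᵥ A *ᵥ y ≤ μ * (y ⬝ᵥ y)) :
    secondLargestEigenvalue hA hn ≤ μ := by
  by_contra! hlt
  obtain ⟨i, j, hij, hj, hi, -⟩ := exists_eigenvalues_eq_secondLargestEigenvalue hA hn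
  have hB : (A - μ • (1 : Matrix n n ℝ)).IsHermitian :=
    hA.sub (isHermitian_one.smul (IsSelfAdjoint.all μ))
  have hBu (z : n → ℝ) (hz : z ⬝ᵥ u = 0) : z ⬝ᵥ (A - μ • (1 : Matrix n n ℝ)) *ᵥ z ≤ 0 := by
    simpa [sub_mulVec, smul_mulVec] using hu z hz
  have hform (k l : n) : (hA.eigenvectorBasis k).ofLp ⬝ᵥ
      (A - μ • (1 : Matrix n n ℝ)) *ᵥ (hA.eigenvectorBasis l).ofLp =
        if k = l then hA.eigenvalues l - μ else 0 := by
    rw [sub_mulVec, smul_mulVec, one_mulVec, hA.mulVec_eigenvectorBasis, ← sub_smul,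
      dotProduct_smul, orthonormalBasis_dotProduct_eq_ite, smul_eq_mul, mul_ite, mul_one, mul_zero]
  have hj_le := dotProduct_mulVec_nonpos_of_conjugate (isHermitian_iff_isSymm.mp hB) hBu
    (x := (hA.eigenvectorBasis i).ofLp) (y := (hA.eigenvectorBasis j).ofLp)
    (by rw [hform, if_pos rfl]; linarith) (by rw [hform, if_neg hij])
  rw [hform, if_pos rfl] at hj_le
  linarith

theorem exists_dotProduct_mulVec_le_secondLargestEigenvalue (hA : A.IsHermitian)
    (hn : 2 ≤ Fintype.card n) :
    ∃ u, ∀ y, y ⬝ᵥ u = 0 → y ⬝ᵥ A *ᵥ y ≤ secondLargestEigenvalue hA hn * (y ⬝ᵥ y) := by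
  obtain ⟨i, -, -, -, -, hle⟩ := exists_eigenvalues_eq_secondLargestEigenvalue hA hn
  refine ⟨(hA.eigenvectorBasis i).ofLp, fun y hy => ?_⟩
  rw [dotProduct_mulVec_eq_sum_eigenvalues hA,
    dotProduct_eq_sum_orthonormalBasis hA.eigenvectorBasis, Finset.mul_sum]
  refine Finset.sum_le_sum fun k _ => ?_
  rw [← pow_two]
  obtain rfl | hk := eq_or_ne k i
  · simp [dotProduct_comm _ y, hy]
  · exact mul_le_mul_of_nonneg_right (hle k hk) (sq_nonneg _)

theorem secondLargestEigenvalue_le_iff (hA : A.IsHermitian) (hn : 2 ≤ Fintype.card n) {μ : ℝ} :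
    secondLargestEigenvalue hA hn ≤ μ ↔
      ∃ u, ∀ y, y ⬝ᵥ u = 0 → y ⬝ᵥ A *ᵥ y ≤ μ * (y ⬝ᵥ y) := by
  refine ⟨fun h => ?_, fun ⟨u, hu⟩ => secondLargestEigenvalue_le_of_hyperplane hA hn hu⟩
  obtain ⟨u, hu⟩ := exists_dotProduct_mulVec_le_secondLargestEigenvalue hA hn
  refine ⟨u, fun y hy => (hu y hy).trans (mul_le_mul_of_nonneg_right h ?_)⟩
  exact Finset.sum_nonneg fun i _ => mul_self_nonneg (y i)

theorem secondLargestEigenvalue_submatrix_le (hA : A.IsHermitian) {f : m → n} (hf : f.Injective)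
    (hm : 2 ≤ Fintype.card m) (hn : 2 ≤ Fintype.card n) :
    secondLargestEigenvalue (hA.submatrix f) hm ≤ secondLargestEigenvalue hA hn := by
  obtain ⟨u, hu⟩ := (secondLargestEigenvalue_le_iff hA hn).mp le_rfl
  refine (secondLargestEigenvalue_le_iff _ hm).mpr ⟨u ∘ f, fun y hy => ?_⟩
  rw [← extend_zero_dotProduct_mulVec hf, ← extend_zero_dotProduct_self hf]
  exact hu _ ((extend_zero_dotProduct hf y u).trans hy)

theorem HasExactlyOnePosEigenvalue.secondLargestEigenvalue_nonpos {hA : A.IsHermitian}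
    (h : HasExactlyOnePosEigenvalue hA) (hn : 2 ≤ Fintype.card n) :
    secondLargestEigenvalue hA hn ≤ 0 := by
  by_contra! hpos
  obtain ⟨i, j, hij, hj, hi, -⟩ := exists_eigenvalues_eq_secondLargestEigenvalue hA hn
  exact hij (Finset.card_le_one.mp h.le i (by simpa using hpos.trans_le hi) j
    (by simpa [hj] using hpos))

theorem fin_three_nonneg_of_secondLargestEigenvalue_nonpos {a : ℝ}
    (hA : (!![0, 1, a; 1, 0, 1; a, 1, 0]).IsHermitian)
    (h : secondLargestEigenvalue hA (by simp) ≤ 0) : 0 ≤ a := by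
  obtain ⟨u, hu⟩ := (secondLargestEigenvalue_le_iff hA _).mp h
  have hform (x y : Fin 3 → ℝ) : x ⬝ᵥ !![0, 1, a; 1, 0, 1; a, 1, 0] *ᵥ y =
      x 0 * (y 1 + a * y 2) + x 1 * (y 0 + y 2) + x 2 * (a * y 0 + y 1) := by
    simp [dotProduct, mulVec, Fin.sum_univ_three]
  have hx : ![1, 1 - a / 2, 1] ⬝ᵥ !![0, 1, a; 1, 0, 1; a, 1, 0] *ᵥ ![1, 1 - a / 2, 1] = 4 := by
    simp only [hform, Matrix.cons_val]
    ring
  have hxy : ![1, 1 - a / 2, 1] ⬝ᵥ !![0, 1, a; 1, 0, 1; a, 1, 0] *ᵥ ![1, 0, -1] = 0 := by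
    simp only [hform, Matrix.cons_val]
    ring
  have hy : ![1, 0, -1] ⬝ᵥ !![0, 1, a; 1, 0, 1; a, 1, 0] *ᵥ ![1, 0, -1] = -2 * a := by
    simp only [hform, Matrix.cons_val]
    ring
  have hle := dotProduct_mulVec_nonpos_of_conjugate (isHermitian_iff_isSymm.mp hA)
    (by simpa using hu) (hx.symm ▸ four_pos) hxy
  linarith

end SecondLargestEigenvalue

section QDistMatrix

open Matrix

variable {V : Type*} {G : SimpleGraph V}

theorem qDistMatrix_self (G : SimpleGraph V) (q : ℝ) (x : V) : qDistMatrix G q x x = 0 := by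
  simp [qDistMatrix]

theorem qDistMatrix_of_adj (q : ℝ) {x y : V} (h : G.Adj x y) : qDistMatrix G q x y = 1 := by
  simp [qDistMatrix, SimpleGraph.dist_eq_one_iff_adj.mpr h]

theorem qDistMatrix_of_dist_eq_two (q : ℝ) {x y : V} (h : G.dist x y = 2) :
    qDistMatrix G q x y = 1 + q⁻¹ := by
  simp [qDistMatrix, h, Finset.sum_range_succ]

theorem exists_adj_adj_of_dist_eq_two {x z : V} (h : G.dist x z = 2) :
    ∃ y, G.Adj x y ∧ G.Adj y z := by
  have hedist : G.edist x z = 2 := by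
    have hreach := SimpleGraph.Reachable.of_dist_ne_zero (h.trans_ne two_ne_zero)
    simp [← hreach.coe_dist_eq_edist, h]
  obtain ⟨-, -, y, hxy, hzy⟩ := SimpleGraph.edist_eq_two_iff.mp hedist
  exact ⟨y, hxy, hzy.symm⟩

theorem dist_eq_two_of_not_adj (hG : G.Connected) {x y : V} (hle : G.dist x y ≤ 2) (hne : x ≠ y)
    (hadj : ¬ G.Adj x y) : G.dist x y = 2 :=
  hle.antisymm (hG.one_lt_dist_of_ne_of_not_adj hne hadj)

theorem qDistMatrix_submatrix_of_dist_eq_two (q : ℝ) {x y z : V} (hxy : G.Adj x y)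
    (hyz : G.Adj y z) (hxz : G.dist x z = 2) :
    (qDistMatrix G q).submatrix ![x, y, z] ![x, y, z] =
      !![0, 1, 1 + q⁻¹; 1, 0, 1; 1 + q⁻¹, 1, 0] := by
  have hzx : G.dist z x = 2 := by rw [SimpleGraph.dist_comm, hxz]
  ext i j
  fin_cases i <;> fin_cases j <;>
    simp [qDistMatrix_self, qDistMatrix_of_adj q, qDistMatrix_of_dist_eq_two q, hxy, hxy.symm,
      hyz, hyz.symm, hxz, hzx]

theorem le_neg_one_of_dist_eq_two [Fintype V] [DecidableEq V] {x z : V} (hxz : G.dist x z = 2)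
    {q : ℝ} (hq : q < 0) (hV : 2 ≤ Fintype.card V)
    (h : secondLargestEigenvalue (qDistMatrix_isHermitian G q) hV ≤ 0) : q ≤ -1 := by
  obtain ⟨y, hxy, hyz⟩ := exists_adj_adj_of_dist_eq_two hxz
  have hne : x ≠ z := by rintro rfl; simp at hxz
  have hinj : Function.Injective ![x, y, z] := by
    intro i j hij
    fin_cases i <;> fin_cases j <;> simp_all [hxy.ne, hyz.ne, hxy.symm.ne, hyz.symm.ne, hne.symm]
  have hsub := (secondLargestEigenvalue_submatrix_le _ hinj (by simp) hV).trans h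
  simp only [qDistMatrix_submatrix_of_dist_eq_two q hxy hyz hxz] at hsub
  have hinv : 0 ≤ 1 + q⁻¹ := fin_three_nonneg_of_secondLargestEigenvalue_nonpos _ hsub
  have hmul : q * (1 + q⁻¹) = q + 1 := by rw [mul_add, mul_inv_cancel₀ hq.ne, mul_one]
  linarith [mul_nonpos_of_nonpos_of_nonneg hq.le hinv]

theorem adjMatrix_induce_eq [DecidableEq V] [DecidableRel G.Adj] (hG : G.Connected) {S : Set V}
    (hdist : ∀ x ∈ S, ∀ y ∈ S, G.dist x y ≤ 2) {q : ℝ} (hq : q ≠ 0) :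
    (G.induce S).adjMatrix ℝ =
      -q • (qDistMatrix G q).submatrix ((↑) : S → V) (↑) + (q + 1) • vecMulVec 1 1 +
        (-q - 1) • (1 : Matrix S S ℝ) := by
  ext s t
  obtain rfl | hst := eq_or_ne s t
  · simp [qDistMatrix_self]
  by_cases hadj : G.Adj s t
  · simp [qDistMatrix_of_adj q hadj, hst, hadj]
  · have h2 := dist_eq_two_of_not_adj hG (hdist s s.2 t t.2) (Subtype.coe_injective.ne hst) hadj
    have hcancel : q * (1 + q⁻¹) = q + 1 := by rw [mul_add, mul_inv_cancel₀ hq, mul_one]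
    simp [qDistMatrix_of_dist_eq_two q h2, hst, hadj, hcancel]

theorem secondLargestEigenvalue_adjMatrix_induce_le [Fintype V] [DecidableEq V]
    [DecidableRel G.Adj] (hG : G.Connected) {S : Set V} [Fintype S] (hS : 2 ≤ Fintype.card S)
    (hdist : ∀ x ∈ S, ∀ y ∈ S, G.dist x y ≤ 2) {q : ℝ} (hq : q ≤ -1) (hV : 2 ≤ Fintype.card V)
    (h : secondLargestEigenvalue (qDistMatrix_isHermitian G q) hV ≤ 0) :
    secondLargestEigenvalue (adjMatrix_isHermitian (G.induce S)) hS ≤ -q - 1 := by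
  have hsub := (secondLargestEigenvalue_submatrix_le _ Subtype.val_injective hS hV).trans h
  obtain ⟨u, hu⟩ := (secondLargestEigenvalue_le_iff _ hS).mp hsub
  refine (secondLargestEigenvalue_le_iff _ hS).mpr ⟨u, fun y hy => ?_⟩
  have hD := hu y hy
  rw [adjMatrix_induce_eq hG hdist (by linarith : q ≠ 0)]
  simp only [add_mulVec, smul_mulVec, one_mulVec, dotProduct_add, dotProduct_smul, smul_eq_mul,
    dotProduct_vecMulVec_one_mulVec]
  have hDq := mul_nonpos_of_nonneg_of_nonpos (by linarith : 0 ≤ -q) (by simpa using hD)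
  have hJ := mul_nonpos_of_nonpos_of_nonneg (by linarith : q + 1 ≤ 0) (sq_nonneg (y ⬝ᵥ 1))
  linarith

theorem secondLargestEigenvalue_adjMatrix_le_neg_one_of_eq_top [Fintype V] [DecidableEq V]
    [DecidableRel G.Adj] (h : G = ⊤) (hV : 2 ≤ Fintype.card V) :
    secondLargestEigenvalue (adjMatrix_isHermitian G) hV ≤ -1 := by
  refine (secondLargestEigenvalue_le_iff _ hV).mpr ⟨1, fun y hy => ?_⟩
  have hadj : G.adjMatrix ℝ = vecMulVec 1 1 - 1 := by
    ext x z
    obtain rfl | hxz := eq_or_ne x z <;> simp [*]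
  rw [hadj, sub_mulVec, one_mulVec, dotProduct_sub, dotProduct_vecMulVec_one_mulVec, hy]
  linarith

end QDistMatrix

theorem stmt16_general {V : Type*} [Fintype V] [DecidableEq V] (G : SimpleGraph V)
    [DecidableRel G.Adj] (hG : G.Connected)
    (S : Set V) [Fintype S] (hS : 2 ≤ Fintype.card S)
    (hdist : ∀ x ∈ S, ∀ y ∈ S, G.dist x y ≤ 2)
    (q : ℝ) (hq : q < 0)
    (hpos : HasExactlyOnePosEigenvalue (qDistMatrix_isHermitian G q)) :
    secondLargestEigenvalue (adjMatrix_isHermitian (G.induce S)) hS ≤ -q - 1 := by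
  by_cases hclique : G.IsClique S
  · have hle := secondLargestEigenvalue_adjMatrix_le_neg_one_of_eq_top
      (SimpleGraph.induce_eq_top.mpr hclique) hS
    linarith
  · obtain ⟨x, hx, z, hz, hne, hadj⟩ : ∃ x ∈ S, ∃ z ∈ S, x ≠ z ∧ ¬ G.Adj x z := by
      simpa [SimpleGraph.IsClique, Set.Pairwise] using hclique
    have hxz : G.dist x z = 2 := dist_eq_two_of_not_adj hG (hdist x hx z hz) hne hadj
    have hV : 2 ≤ Fintype.card V := hS.trans (set_fintype_card_le_univ S)
    have hD := hpos.secondLargestEigenvalue_nonpos hV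
    have hq1 : q ≤ -1 := le_neg_one_of_dist_eq_two hxz hq hV hD
    exact secondLargestEigenvalue_adjMatrix_induce_le hG hS hdist hq1 hV hD

theorem stmt16 {V : Type*} [Fintype V] [DecidableEq V] (G : SimpleGraph V) [DecidableRel G.Adj]
    (hG : IsDistanceRegular G) (hD : 2 ≤ G.diam)
    (S : Set V) [Fintype S] (hS : 2 ≤ Fintype.card S)
    (hreg : ∃ d : ℕ, (G.induce S).IsRegularOfDegree d)
    (hdist : ∀ x ∈ S, ∀ y ∈ S, G.dist x y ≤ 2)
    (q : ℝ) (hq : q < 0)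
    (hpos : HasExactlyOnePosEigenvalue (qDistMatrix_isHermitian G q)) :
    secondLargestEigenvalue (adjMatrix_isHermitian (G.induce S)) hS ≤ -q - 1 := by
  exact stmt16_general G hG.connected S hS hdist q hq hpos
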